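/- Let 1 ≤ i ≤ m − 1 and let Λ̄ ∈ F[X] with deg Λ̄ ≤ 2^{i+1} − 1. Let P be the quotient of Λ̄ on division by s_i, and let P′ be the quotient of P on division by s_{i−1}. Then the quotient of (s_{i−1})^2 · Λ̄ on division by s_{i+1} equals P + s_{i−1}(v_{i−1}) · P′. -/

import Mathlib

open Polynomial Finset

/-- The GF(2)-linear span of `v 0, …, v (k-1)` as a `Finset`. -/
noncomputable def Vset {F : Type*} [Field F] (v : ℕ → F) (k : ℕ) : Finset F :=
  letI := Classical.decEq F
  (Finset.univ : Finset (Fin k → Bool)).image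
    (fun ε => ∑ j : Fin k, if ε j then v j else 0)

/-- The subspace polynomial `s_k(X) = ∏_{a ∈ V_k} (X - a)`. -/
noncomputable def sPoly {F : Type*} [Field F] (v : ℕ → F) (k : ℕ) : Polynomial F :=
  ∏ a ∈ Vset v k, (X - C a)

/-- The basis polynomial `X_i(X) = ∏_{j<m} s_j(X)^{i_j}`, where `i_j` is the
`j`-th binary digit of `i`. -/
noncomputable def XPoly {F : Type*} [Field F] (v : ℕ → F) (m i : ℕ) : Polynomial F :=
  ∏ j ∈ Finset.range m, (sPoly v j) ^ (Nat.testBit i j).toNat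

/-- The normalizing constant `p_i = ∏_{j<m} (s_j(v_j))^{i_j}`. -/
noncomputable def pCoef {F : Type*} [Field F] (v : ℕ → F) (m i : ℕ) : F :=
  ∏ j ∈ Finset.range m, ((sPoly v j).eval (v j)) ^ (Nat.testBit i j).toNat

/-- `v 0, …, v (m-1)` are linearly independent over the prime field GF(2). -/
def LinIndepGF2 {F : Type*} [Field F] (v : ℕ → F) (m : ℕ) : Prop :=
  ∀ ε : ℕ → Bool, (∑ j ∈ Finset.range m, if ε j then v j else 0) = 0 →
    ∀ j < m, ε j = false

/-!
Write `t = s_{i-1}`, `a = t(v_{i-1})`, `b = s_i(v_i)`. Additivity of subspace polynomials in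
characteristic two gives `s_i = t² - a t` and `s_{i+1} = s_i² - b s_i = t (t - a) (s_i - b)`. Hence
`t² Λ / s_{i+1} = s_i Λ / s_{i+1} + a (t Λ / s_{i+1})`, where the first quotient is that of `Λ` by
`s_i - b` and the second one is obtained by dividing further by `t - a`. The degree bound makes
the constants `b` and `a` in these divisors irrelevant.
-/

section DivByMonic

variable {R : Type*} [CommRing R] {p q r : R[X]}

theorem add_divByMonic (f g : R[X]) (hq : q.Monic) :
    (f + g) /ₘ q = f /ₘ q + g /ₘ q := by
  nontriviality R
  refine (div_modByMonic_unique _ (f %ₘ q + g %ₘ q) hq ⟨?_, ?_⟩).1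
  · linear_combination modByMonic_add_div f q + modByMonic_add_div g q
  · exact (degree_add_le _ _).trans_lt
      (max_lt (degree_modByMonic_lt f hq) (degree_modByMonic_lt g hq))

theorem C_mul_divByMonic (c : R) (f : R[X]) (hq : q.Monic) :
    (C c * f) /ₘ q = C c * (f /ₘ q) := by
  nontriviality R
  refine (div_modByMonic_unique _ (C c * (f %ₘ q)) hq ⟨?_, ?_⟩).1
  · linear_combination C c * modByMonic_add_div f q
  · rw [← smul_eq_C_mul]
    exact (degree_smul_le c _).trans_lt (degree_modByMonic_lt f hq)

theorem divByMonic_mul (f : R[X]) (hp : p.Monic) (hq : q.Monic) :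
    f /ₘ (p * q) = f /ₘ p /ₘ q := by
  nontriviality R
  refine (div_modByMonic_unique _ (f %ₘ p + p * (f /ₘ p %ₘ q)) (hp.mul hq) ⟨?_, ?_⟩).1
  · linear_combination modByMonic_add_div f p + p * modByMonic_add_div (f /ₘ p) q
  · have degree_rem : (p * (f /ₘ p %ₘ q)).degree < (p * q).degree := by
      rw [hp.degree_mul_comm, hp.degree_mul, hp.degree_mul_comm, hp.degree_mul]
      exact WithBot.add_lt_add_right (degree_ne_bot.2 hp.ne_zero) (degree_modByMonic_lt _ hq)
    have degree_le : p.degree ≤ (p * q).degree := by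
      rw [hq.degree_mul]
      exact le_add_of_nonneg_right (zero_le_degree_iff.2 hq.ne_zero)
    exact (degree_add_le _ _).trans_lt
      (max_lt ((degree_modByMonic_lt f hp).trans_le degree_le) degree_rem)

theorem mul_divByMonic_mul_left (f : R[X]) (hp : p.Monic) (hq : q.Monic) :
    (p * f) /ₘ (p * q) = f /ₘ q := by
  rw [divByMonic_mul _ hp hq, mul_divByMonic_cancel_left f hp]

theorem divByMonic_sub_of_natDegree_add_lt {f : R[X]} (hq : q.Monic)
    (hrq : r.natDegree < q.natDegree) (hfr : f.natDegree + r.natDegree < 2 * q.natDegree) :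
    f /ₘ (q - r) = f /ₘ q := by
  nontriviality R
  have hdeg : r.degree < q.degree := degree_lt_degree hrq
  refine (div_modByMonic_unique _ (f %ₘ q + r * (f /ₘ q)) (hq.sub_of_left hdeg) ⟨?_, ?_⟩).1
  · linear_combination modByMonic_add_div f q
  · rw [degree_sub_eq_left_of_degree_lt hdeg]
    refine (degree_add_le _ _).trans_lt (max_lt (degree_modByMonic_lt f hq) (degree_lt_degree ?_))
    have := natDegree_mul_le (p := r) (q := f /ₘ q)
    rw [natDegree_divByMonic f hq] at this
    omega

theorem divByMonic_sub_C {f : R[X]} (c : R) (hq : q.Monic)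
    (hf : f.natDegree < 2 * q.natDegree) : f /ₘ (q - C c) = f /ₘ q :=
  divByMonic_sub_of_natDegree_add_lt hq (by rw [natDegree_C]; omega) (by rwa [natDegree_C])

theorem monic_sub_C (c : R) (hq : q.Monic) (hdeg : 0 < q.natDegree) : (q - C c).Monic :=
  hq.sub_of_left (degree_C_le.trans_lt (natDegree_pos_iff_degree_pos.1 hdeg))

theorem sq_mul_divByMonic_sq_sub {t s Λ : R[X]} {a b : R} (ht : t.Monic)
    (hs : s = t ^ 2 - C a * t) (hΛ : Λ.natDegree < 4 * t.natDegree) :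
    (t ^ 2 * Λ) /ₘ (s ^ 2 - C b * s) = Λ /ₘ s + C a * (Λ /ₘ s /ₘ t) := by
  nontriviality R
  have hs_factor : s = t * (t - C a) := by rw [hs]; ring
  have hta : (t - C a).Monic := monic_sub_C a ht (by omega)
  have hs_monic : s.Monic := hs_factor ▸ ht.mul hta
  have hs_natDegree : s.natDegree = 2 * t.natDegree := by
    rw [hs_factor, ht.natDegree_mul hta, natDegree_sub_C, two_mul]
  have hsb : (s - C b).Monic := monic_sub_C b hs_monic (by omega)
  have hP : Λ /ₘ (s - C b) = Λ /ₘ s := divByMonic_sub_C b hs_monic (by omega)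
  have hP' : Λ /ₘ s /ₘ (t - C a) = Λ /ₘ s /ₘ t :=
    divByMonic_sub_C a ht (by rw [natDegree_divByMonic Λ hs_monic]; omega)
  have hsΛ : (s * Λ) /ₘ (s * (s - C b)) = Λ /ₘ s := by
    rw [mul_divByMonic_mul_left Λ hs_monic hsb, hP]
  have htΛ : (t * Λ) /ₘ (s * (s - C b)) = Λ /ₘ s /ₘ t := by
    rw [show s * (s - C b) = t * ((s - C b) * (t - C a)) by rw [hs_factor]; ring,
      mul_divByMonic_mul_left Λ ht (hsb.mul hta), divByMonic_mul Λ hsb hta, hP, hP']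
  calc (t ^ 2 * Λ) /ₘ (s ^ 2 - C b * s)
      = (s * Λ + C a * (t * Λ)) /ₘ (s * (s - C b)) := by congr 1 <;> rw [hs] <;> ring
    _ = Λ /ₘ s + C a * (Λ /ₘ s /ₘ t) := by
      have hu : (s * (s - C b)).Monic := hs_monic.mul hsb
      rw [add_divByMonic _ _ hu, C_mul_divByMonic _ _ hu, hsΛ, htΛ]

end DivByMonic

section SubspacePolynomial

variable {F : Type*} [Field F] {v : ℕ → F} {k m : ℕ}

theorem LinIndepGF2.mono (hv : LinIndepGF2 v m) (hkm : k ≤ m) : LinIndepGF2 v k := by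
  intro ε hε j hj
  have hsum : ∑ l ∈ range m, (if ε l && decide (l < k) then v l else 0) = 0 := by
    refine (sum_subset (range_subset_range.2 hkm) fun l _ hl => ?_).symm.trans
      ((sum_congr rfl fun l hl => ?_).trans hε)
    · simp [mem_range.not.1 hl]
    · simp [mem_range.1 hl]
  simpa [hj] using hv _ hsum j (hj.trans_le hkm)

theorem mem_Vset {a : F} :
    a ∈ Vset v k ↔ ∃ ε : ℕ → Bool, ∑ j ∈ range k, (if ε j then v j else 0) = a := by
  classical
  simp only [Vset, mem_image, mem_univ, true_and, sum_range]
  constructor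
  · rintro ⟨ε, hε⟩
    exact ⟨fun j => if hj : j < k then ε ⟨j, hj⟩ else false, by simpa using hε⟩
  · rintro ⟨ε, hε⟩
    exact ⟨fun j => ε j, hε⟩

theorem Vset_zero (v : ℕ → F) : Vset v 0 = {0} := by
  ext a
  simp [mem_Vset, eq_comm (a := a)]

theorem sum_update_range_succ (ε : ℕ → Bool) (c : Bool) :
    ∑ j ∈ range (k + 1), (if Function.update ε k c j then v j else 0) =
      ∑ j ∈ range k, (if ε j then v j else 0) + if c then v k else 0 := by
  rw [sum_range_succ, Function.update_self]
  congr 1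
  exact sum_congr rfl fun j hj => by rw [Function.update_of_ne (mem_range.1 hj).ne]

theorem mem_Vset_succ {a : F} :
    a ∈ Vset v (k + 1) ↔ a ∈ Vset v k ∨ ∃ b ∈ Vset v k, b + v k = a := by
  simp only [mem_Vset]
  constructor
  · rintro ⟨ε, rfl⟩
    rw [sum_range_succ]
    cases hεk : ε k
    · exact .inl ⟨ε, by simp⟩
    · exact .inr ⟨_, ⟨ε, rfl⟩, by simp⟩
  · rintro (⟨ε, rfl⟩ | ⟨_, ⟨ε, rfl⟩, rfl⟩)
    · exact ⟨_, (sum_update_range_succ ε false).trans (by simp)⟩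
    · exact ⟨_, (sum_update_range_succ ε true).trans (by simp)⟩

theorem sPoly_zero (v : ℕ → F) : sPoly v 0 = X := by
  simp [sPoly, Vset_zero]

theorem sPoly_monic (v : ℕ → F) (k : ℕ) : (sPoly v k).Monic :=
  monic_prod_X_sub_C _ _

theorem natDegree_sPoly (v : ℕ → F) (k : ℕ) : (sPoly v k).natDegree = #(Vset v k) :=
  natDegree_finsetProd_X_sub_C_eq_card _ _

section CharTwo

variable [CharP F 2]

theorem add_mem_Vset {a b : F} (ha : a ∈ Vset v k) (hb : b ∈ Vset v k) : a + b ∈ Vset v k := by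
  obtain ⟨ε, rfl⟩ := mem_Vset.1 ha
  obtain ⟨δ, rfl⟩ := mem_Vset.1 hb
  refine mem_Vset.2 ⟨fun j => ε j ^^ δ j, ?_⟩
  rw [← sum_add_distrib]
  refine sum_congr rfl fun j _ => ?_
  cases hε : ε j <;> cases hδ : δ j <;> simp [hε, hδ, CharTwo.add_self_eq_zero]

theorem LinIndepGF2.notMem_Vset (hv : LinIndepGF2 v (k + 1)) : v k ∉ Vset v k := by
  intro hmem
  obtain ⟨ε, hε⟩ := mem_Vset.1 hmem
  have hsum := sum_update_range_succ (v := v) (k := k) ε true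
  rw [hε, if_pos rfl, CharTwo.add_self_eq_zero] at hsum
  simpa using hv _ hsum k k.lt_succ_self

theorem LinIndepGF2.disjoint_Vset (hv : LinIndepGF2 v (k + 1)) :
    Disjoint (Vset v k) ((Vset v k).map (addRightEmbedding (v k))) := by
  refine disjoint_left.2 fun a ha hav => hv.notMem_Vset ?_
  obtain ⟨b, hb, rfl⟩ := mem_map.1 hav
  simpa [CharTwo.add_cancel_left] using add_mem_Vset hb ha

theorem LinIndepGF2.Vset_succ (hv : LinIndepGF2 v (k + 1)) :
    Vset v (k + 1) =
      (Vset v k).disjUnion ((Vset v k).map (addRightEmbedding (v k))) hv.disjoint_Vset := by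
  ext a
  simp [mem_Vset_succ]

theorem LinIndepGF2.card_Vset (hv : LinIndepGF2 v k) : #(Vset v k) = 2 ^ k := by
  induction k with
  | zero => simp [Vset_zero]
  | succ k ih =>
    rw [hv.Vset_succ, card_disjUnion, card_map, ih (hv.mono k.le_succ), pow_succ, mul_two]

theorem LinIndepGF2.sPoly_succ_eq_mul_comp (hv : LinIndepGF2 v (k + 1)) :
    sPoly v (k + 1) = sPoly v k * (sPoly v k).comp (X - C (v k)) := by
  rw [sPoly, hv.Vset_succ, prod_disjUnion, prod_map, sPoly, Polynomial.prod_comp]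
  congr 1
  refine prod_congr rfl fun a _ => ?_
  simp only [addRightEmbedding_apply, C_add, sub_comp, X_comp, C_comp]
  ring

theorem LinIndepGF2.sPoly_comp_X_sub_C (hv : LinIndepGF2 v k) (c : F) :
    (sPoly v k).comp (X - C c) = sPoly v k - C ((sPoly v k).eval c) := by
  -- With `e = s_k(v_k)`, the product formula reads `s_{k+1} = s_k (s_k - e)`, and
  -- `(x - y) (x - y - e) = x (x - e) - y (y - e)` in characteristic two.
  induction k generalizing c with
  | zero => simp [sPoly_zero]
  | succ k ih =>
    have ih := ih (hv.mono k.le_succ)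
    rw [hv.sPoly_succ_eq_mul_comp, ih]
    simp only [mul_comp, sub_comp, C_comp, ih, eval_mul, eval_sub, eval_C, C_mul, C_sub]
    have h_two : (2 : F[X]) = 0 := CharTwo.two_eq_zero
    linear_combination (C ((sPoly v k).eval c) ^ 2 - sPoly v k * C ((sPoly v k).eval c)) * h_two

theorem LinIndepGF2.sPoly_succ (hv : LinIndepGF2 v (k + 1)) :
    sPoly v (k + 1) = sPoly v k ^ 2 - C ((sPoly v k).eval (v k)) * sPoly v k := by
  rw [hv.sPoly_succ_eq_mul_comp, (hv.mono k.le_succ).sPoly_comp_X_sub_C]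
  ring

end CharTwo

end SubspacePolynomial

theorem quotient_decomposition_general {F : Type*} [Field F] [CharP F 2] {v : ℕ → F} {i : ℕ}
    (hi : 1 ≤ i) (hv : LinIndepGF2 v (i + 1)) {Λ : F[X]}
    (hΛ : Λ.degree ≤ ((2 ^ (i + 1) - 1 : ℕ) : WithBot ℕ)) :
    (sPoly v (i - 1) ^ 2 * Λ) /ₘ sPoly v (i + 1) =
      Λ /ₘ sPoly v i +
        C ((sPoly v (i - 1)).eval (v (i - 1))) * (Λ /ₘ sPoly v i /ₘ sPoly v (i - 1)) := by
  obtain ⟨n, rfl⟩ := Nat.exists_eq_add_of_le' hi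
  have natDegree_lt : Λ.natDegree < 2 ^ (n + 2) :=
    (natDegree_le_of_degree_le hΛ).trans_lt (Nat.sub_lt (by positivity) one_pos)
  have natDegree_sPoly_eq : 4 * (sPoly v n).natDegree = 2 ^ (n + 2) := by
    rw [natDegree_sPoly, (hv.mono (by omega)).card_Vset]
    ring
  rw [Nat.add_sub_cancel, hv.sPoly_succ]
  exact sq_mul_divByMonic_sq_sub (sPoly_monic v n) (hv.mono (n + 1).le_succ).sPoly_succ
    (natDegree_lt.trans_eq natDegree_sPoly_eq.symm)

/-- for `1 ≤ i ≤ m - 1` and `deg Λ̄ ≤ 2^(i+1) - 1`, the quotient of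
`(s_(i-1))^2·Λ̄` by `s_(i+1)` equals `P + s_(i-1)(v_(i-1))·P'`, where `P` is the
quotient of `Λ̄` by `s_i` and `P'` the quotient of `P` by `s_(i-1)`. -/
theorem quotient_decomposition {F : Type*} [Field F] [Fintype F] (m : ℕ) (hm : 1 ≤ m)
    (hcard : Fintype.card F = 2 ^ m) (v : ℕ → F) (hv : LinIndepGF2 v m)
    (i : ℕ) (hi1 : 1 ≤ i) (him : i + 1 ≤ m)
    (Λbar : Polynomial F) (hΛbar : Λbar.degree ≤ ((2 ^ (i + 1) - 1 : ℕ) : WithBot ℕ)) :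
    ((sPoly v (i - 1)) ^ 2 * Λbar) /ₘ sPoly v (i + 1)
      = Λbar /ₘ sPoly v i
        + C ((sPoly v (i - 1)).eval (v (i - 1)))
            * ((Λbar /ₘ sPoly v i) /ₘ sPoly v (i - 1)) := by
  have : CharP F 2 := charP_of_card_eq_prime_pow hcard
  exact quotient_decomposition_general hi1 (hv.mono him) hΛbar
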